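/- arXiv:1712.10124 — 2 statements merged into one kernel-verified Lean document; each statement's English description precedes it below -/
import Mathlib

section
/- Let h be a positive integer, ε := exp(2πi/h) ∈ ℂ, and let a : ℕ → ℂ satisfy a(k) = a(gcd(k, h)) for every natural number k (with gcd(0, h) = h). Set A(q) := ∑_{k=0}^{h−1} a(k) q^k. Then for every q ∈ ℂ with q^h ≠ 1: A(q)/(1 − q^h) = (1/h) ∑_{d | h} A(ε^{h/d}) · ( ∑_{k=0}^{d−1} c_d(k) q^k ) / (1 − q^d), where c_d(k) := ∑_{ζ} ζ^k is the Ramanujan sum, the sum running over all primitive d-th roots of unity ζ in ℂ. -/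
/-!
A polynomial `P` of degree less than `h` is recovered from its values at the `h`-th roots of unity
by Lagrange interpolation, which gives the partial fraction expansion
`P(q) / (1 - q ^ h) = (1 / h) ∑ P(w) / (1 - w⁻¹ q)` over `w ^ h = 1`. Group the roots `w` by their
exact order `d`. If `m` is coprime to `h`, then `k ↦ m k` permutes the residues modulo `h` and
preserves `gcd(k, h)`, so for Cohen coefficients `P` is constant on the primitive `d`-th roots of
unity. Inversion permutes these roots, so what remains of the `d`-th group is `∑ 1 / (1 - ζ q)`, and
`1 / (1 - ζ q) = (∑_{k < d} ζ ^ k q ^ k) / (1 - q ^ d)` turns it into Ramanujan sums.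
-/

open Finset Polynomial

/-- The `h`-Cohen arithmetic functions: `a k` depends only on `gcd(k, h)`. Since
`Nat.gcd 0 h = h`, this includes `a 0 = a h`. -/
def IsCohen {R : Type*} (h : ℕ) (a : ℕ → R) : Prop :=
  ∀ k, a k = a (k.gcd h)

/-- The Ramanujan sum `c_d(k)`, with values in the domain `R` whose primitive `d`-th roots of unity
are summed. -/
noncomputable def ramanujanSum (R : Type*) [CommRing R] [IsDomain R] (d k : ℕ) : R :=
  ∑ ζ ∈ primitiveRoots d R, ζ ^ k

theorem IsCohen.sum_range_mul_pow_pow {R : Type*} [Semiring R] {h m : ℕ} {a : ℕ → R} {z : R}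
    (ha : IsCohen h a) (hm : m.Coprime h) (hz : z ^ h = 1) :
    ∑ k ∈ range h, a k * (z ^ m) ^ k = ∑ k ∈ range h, a k * z ^ k := by
  have mapsTo : Set.MapsTo (fun k => m * k % h) (range h) (range h) := fun k hk =>
    mem_coe.2 (mem_range.2 (Nat.mod_lt _ (Nat.zero_lt_of_lt (mem_range.1 hk))))
  have injOn : Set.InjOn (fun k => m * k % h) (range h) := fun k hk l hl hkl =>
    (Nat.ModEq.cancel_left_of_coprime hm.symm hkl).eq_of_lt_of_lt (mem_range.1 hk) (mem_range.1 hl)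
  have coeff_eq (k : ℕ) : a (m * k % h) = a k := by
    rw [ha (m * k % h), (Nat.mod_modEq _ h).gcd_eq, hm.gcd_mul_left_cancel k, ← ha k]
  refine sum_nbij (fun k => m * k % h) mapsTo injOn
    (surjOn_of_injOn_of_card_le _ mapsTo injOn le_rfl) fun k _ => ?_
  rw [coeff_eq, ← pow_mul, ← pow_eq_pow_mod _ hz]

theorem exists_coprime_natCast_eq {d h : ℕ} [NeZero h] (hd : d ∣ h) (u : (ZMod d)ˣ) :
    ∃ m : ℕ, m.Coprime h ∧ (m : ZMod d) = u := by
  obtain ⟨v, rfl⟩ := ZMod.unitsMap_surjective hd u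
  exact ⟨(v : ZMod h).val, ZMod.val_coe_unit_coprime v, by
    rw [ZMod.unitsMap_val, ZMod.natCast_val]⟩

theorem exists_coprime_pow_eq {R : Type*} [CommRing R] [IsDomain R] {d h : ℕ} [NeZero h]
    (hd : d ∣ h) {z w : R} (hz : IsPrimitiveRoot z d) (hw : IsPrimitiveRoot w d) :
    ∃ m : ℕ, m.Coprime h ∧ z ^ m = w := by
  have : NeZero d := ⟨ne_zero_of_dvd_ne_zero (NeZero.ne h) hd⟩
  obtain ⟨i, -, hi, rfl⟩ := hz.isPrimitiveRoot_iff.1 hw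
  obtain ⟨m, hm, hmi⟩ := exists_coprime_natCast_eq hd (ZMod.unitOfCoprime i hi)
  rw [ZMod.coe_unitOfCoprime, ZMod.natCast_eq_natCast_iff'] at hmi
  exact ⟨m, hm, by rw [pow_eq_pow_mod m hz.pow_eq_one, hmi, ← pow_eq_pow_mod i hz.pow_eq_one]⟩

theorem IsCohen.sum_range_mul_pow_eq {R : Type*} [CommRing R] [IsDomain R] {d h : ℕ}
    {a : ℕ → R} {z w : R} (ha : IsCohen h a) (hd : d ∣ h) (hz : IsPrimitiveRoot z d)
    (hw : IsPrimitiveRoot w d) :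
    ∑ k ∈ range h, a k * z ^ k = ∑ k ∈ range h, a k * w ^ k := by
  obtain rfl | hh := eq_or_ne h 0
  · simp
  have : NeZero h := ⟨hh⟩
  obtain ⟨m, hm, rfl⟩ := exists_coprime_pow_eq hd hz hw
  exact (ha.sum_range_mul_pow_pow hm ((hz.pow_eq_one_iff_dvd h).2 hd)).symm

theorem sum_nthRootsFinset_one_eq_sum_divisors {R M : Type*} [CommRing R] [IsDomain R]
    [AddCommMonoid M] (h : ℕ) (f : R → M) :
    ∑ w ∈ nthRootsFinset h (1 : R), f w = ∑ d ∈ h.divisors, ∑ w ∈ primitiveRoots d R, f w := by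
  classical
  rw [IsPrimitiveRoot.nthRoots_one_eq_biUnion_primitiveRoots,
    sum_biUnion fun _ _ _ _ hne => IsPrimitiveRoot.disjoint hne]

theorem nodal_nthRootsFinset_one {R : Type*} [CommRing R] [IsDomain R] {h : ℕ} (hh : 0 < h)
    {ε : R} (hε : IsPrimitiveRoot ε h) :
    Lagrange.nodal (nthRootsFinset h (1 : R)) id = X ^ h - 1 :=
  (X_pow_sub_one_eq_prod hh hε).symm

section Field

variable {K : Type*} [Field K] {q : K}

theorem geom_sum_div_one_sub_pow {d : ℕ} (hq : q ^ d ≠ 1) :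
    (∑ k ∈ range d, q ^ k) / (1 - q ^ d) = (1 - q)⁻¹ := by
  have hsub : 1 - q ^ d ≠ 0 := sub_ne_zero.2 hq.symm
  rw [← geom_sum_mul_neg] at hsub ⊢
  rw [div_mul_cancel_left₀ (left_ne_zero_of_mul hsub)]

theorem sum_ramanujanSum_mul_pow_div {d : ℕ} (hq : q ^ d ≠ 1) :
    (∑ k ∈ range d, ramanujanSum K d k * q ^ k) / (1 - q ^ d) =
      ∑ ζ ∈ primitiveRoots d K, (1 - ζ * q)⁻¹ := by
  simp only [ramanujanSum, sum_mul, ← mul_pow]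
  rw [sum_comm, sum_div]
  refine sum_congr rfl fun ζ hζ => ?_
  have hpow : (ζ * q) ^ d = q ^ d := by
    rw [mul_pow, (isPrimitiveRoot_of_mem_primitiveRoots hζ).pow_eq_one, one_mul]
  rw [← geom_sum_div_one_sub_pow (hpow ▸ hq), hpow]

theorem sum_primitiveRoots_inv {M : Type*} [AddCommMonoid M] (d : ℕ) (f : K → M) :
    ∑ ζ ∈ primitiveRoots d K, f ζ⁻¹ = ∑ ζ ∈ primitiveRoots d K, f ζ := by
  obtain rfl | hd := d.eq_zero_or_pos
  · simp
  · exact sum_equiv (Equiv.inv K) (by simp [mem_primitiveRoots hd]) (by simp)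

theorem nodalWeight_nthRootsFinset_one [DecidableEq K] {h : ℕ} {ε w : K}
    (hε : IsPrimitiveRoot ε h) (hw : w ∈ nthRootsFinset h (1 : K)) :
    Lagrange.nodalWeight (nthRootsFinset h 1) id w = w / h := by
  have hh : 0 < h := Nat.pos_of_ne_zero (by rintro rfl; simp at hw)
  have hwh : w ^ (h - 1) * w = 1 := by
    rw [pow_sub_one_mul hh.ne', (mem_nthRootsFinset hh 1).1 hw]
  calc Lagrange.nodalWeight (nthRootsFinset h 1) id w
      = (h * w ^ (h - 1))⁻¹ := by
        rw [Lagrange.nodalWeight_eq_eval_derivative_nodal hw, nodal_nthRootsFinset_one hh hε]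
        simp [derivative_X_pow, mul_comm]
    _ = w / h := by
        rw [mul_inv, inv_eq_of_mul_eq_one_right hwh, inv_mul_eq_div]

theorem eval_eq_pow_sub_one_mul_sum_nthRootsFinset {h : ℕ} {ε : K} (hε : IsPrimitiveRoot ε h)
    {P : K[X]} (hP : P.degree < h) (hq : q ^ h ≠ 1) :
    P.eval q =
      (q ^ h - 1) * ∑ w ∈ nthRootsFinset h (1 : K), w / h * (q - w)⁻¹ * P.eval w := by
  classical
  have hh : 0 < h := Nat.pos_of_ne_zero (by rintro rfl; simp at hq)
  have q_ne : ∀ w ∈ nthRootsFinset h (1 : K), q ≠ id w := by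
    rintro w hw rfl
    exact hq ((mem_nthRootsFinset hh 1).1 hw)
  have interpolation : P = Lagrange.interpolate (nthRootsFinset h (1 : K)) id (P.eval ·) :=
    Lagrange.eq_interpolate Function.injective_id.injOn (by rwa [hε.card_nthRootsFinset])
  conv_lhs =>
    rw [interpolation, Lagrange.eval_interpolate_not_at_node _ q_ne,
      nodal_nthRootsFinset_one hh hε, eval_sub, eval_pow, eval_X, eval_one]
  congr 1
  exact sum_congr rfl fun w hw => by rw [nodalWeight_nthRootsFinset_one hε hw, id]

theorem eval_div_one_sub_pow_eq_sum_nthRootsFinset {h : ℕ} {ε : K} (hε : IsPrimitiveRoot ε h)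
    {P : K[X]} (hP : P.degree < h) (hq : q ^ h ≠ 1) :
    P.eval q / (1 - q ^ h) =
      1 / h * ∑ w ∈ nthRootsFinset h (1 : K), P.eval w * (1 - w⁻¹ * q)⁻¹ := by
  have hsub : 1 - q ^ h ≠ 0 := sub_ne_zero.2 hq.symm
  rw [eval_eq_pow_sub_one_mul_sum_nthRootsFinset hε hP hq, ← neg_sub, neg_mul, neg_div,
    mul_div_cancel_left₀ _ hsub, mul_sum, ← sum_neg_distrib]
  refine sum_congr rfl fun w hw => ?_
  have hw0 : w ≠ 0 := ne_zero_of_mem_nthRootsFinset one_ne_zero hw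
  have hfactor : 1 - w⁻¹ * q = -(w⁻¹ * (q - w)) := by
    rw [mul_sub, inv_mul_cancel₀ hw0, neg_sub]
  rw [hfactor, inv_neg, mul_inv, inv_inv]
  ring

end Field

theorem stmt_4_general {K : Type*} [Field K] {h : ℕ} {ε : K} (hε : IsPrimitiveRoot ε h)
    {a : ℕ → K} (ha : IsCohen h a) {A : K → K} (hA : ∀ q, A q = ∑ k ∈ range h, a k * q ^ k)
    {q : K} (hq : q ^ h ≠ 1) :
    A q / (1 - q ^ h) =
      1 / h * ∑ d ∈ h.divisors, A (ε ^ (h / d)) *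
        ((∑ k ∈ range d, ramanujanSum K d k * q ^ k) / (1 - q ^ d)) := by
  let P : K[X] := ∑ k ∈ range h, C (a k) * X ^ k
  have hP : P.degree < h := by
    simpa only [P, sum_range] using degree_sum_fin_lt fun k : Fin h => a k
  have eval_P (z : K) : P.eval z = A z := by simp [P, hA, eval_finsetSum]
  rw [← eval_P q, eval_div_one_sub_pow_eq_sum_nthRootsFinset hε hP hq,
    sum_nthRootsFinset_one_eq_sum_divisors]
  congr 1
  refine sum_congr rfl fun d hd => ?_
  obtain ⟨hdh, hh⟩ := Nat.mem_divisors.1 hd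
  have hqd : q ^ d ≠ 1 := fun hqd => hq <| by
    rw [← Nat.mul_div_cancel' hdh, pow_mul, hqd, one_pow]
  have hεd : IsPrimitiveRoot (ε ^ (h / d)) d :=
    hε.pow (Nat.pos_of_ne_zero hh) (Nat.div_mul_cancel hdh).symm
  have A_eq {w : K} (hw : w ∈ primitiveRoots d K) : A w = A (ε ^ (h / d)) := by
    rw [hA, hA, ha.sum_range_mul_pow_eq hdh (isPrimitiveRoot_of_mem_primitiveRoots hw) hεd]
  rw [sum_ramanujanSum_mul_pow_div hqd, ← sum_primitiveRoots_inv d fun ζ => (1 - ζ * q)⁻¹, mul_sum]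
  exact sum_congr rfl fun w hw => by rw [eval_P, A_eq hw]

/-- For an `h`-Cohen arithmetic function `a` (i.e. `a(k) = a(gcd(k,h))`),
`A(q) := ∑_{k<h} a(k) q^k`, `ε := exp(2πi/h)`, and any `q` with `q^h ≠ 1`:
`A(q)/(1 − q^h) = (1/h) ∑_{d ∣ h} A(ε^{h/d}) · (∑_{k<d} c_d(k) q^k)/(1 − q^d)`,
where `c_d(k)` is the Ramanujan sum. -/
theorem stmt_4 (h : ℕ) (hh : 0 < h)
    (ε : ℂ) (hε : ε = Complex.exp (2 * Real.pi * Complex.I / h))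
    (a : ℕ → ℂ) (ha : ∀ k : ℕ, a k = a (Nat.gcd k h))
    (A : ℂ → ℂ) (hA : ∀ q : ℂ, A q = ∑ k ∈ Finset.range h, a k * q ^ k)
    (q : ℂ) (hq : q ^ h ≠ 1) :
    A q / (1 - q ^ h) =
      (1 / (h : ℂ)) * ∑ d ∈ h.divisors, A (ε ^ (h / d)) *
        ((∑ k ∈ Finset.range d, (∑ ζ ∈ primitiveRoots d ℂ, ζ ^ k) * q ^ k) /
          (1 - q ^ d)) :=
  stmt_4_general (hε ▸ Complex.isPrimitiveRoot_exp h hh.ne') ha hA hq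
end

section
/- Let h ≥ 2 be an integer. Let m : ℕ → ℕ satisfy m(k) = m(gcd(k, h)) for every k ≥ 1 together with m(h) = 0 and m(0) = 0, and set n := ∑_{k=1}^{h−1} m(k) and E(q) := ∑_{k=1}^{h−1} m(k) q^k. Then the polynomial identity n − E(q) = ∑_{d | h, d > 1} m(h/d) · ( φ(d) − Ψ_d(q^{h/d}) ) holds in ℂ[q], where φ is Euler's totient function and Ψ_d(q) := ∑_{1 ≤ j ≤ d, gcd(j,d)=1} q^j. -/
open Polynomial

/-!
Writing `k / h` in lowest terms as `j / d` matches the integers `1 ≤ k ≤ h` with the pairs of a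
divisor `d ∣ h` and some `1 ≤ j ≤ d` coprime to `d`; here `gcd k h = h / d`, and `k = h` corresponds
to `d = 1`. The weight `m k` is therefore the constant `m (h / d)` on the class of `d`, and summing
`m k * (1 - X ^ k)` class by class gives the identity.
-/

theorem gcd_mul_div_of_gcd_eq_one {j d n : ℕ} (hd : d ∣ n) (hj : Nat.gcd j d = 1) :
    Nat.gcd (j * (n / d)) n = n / d := by
  calc Nat.gcd (j * (n / d)) n
      = Nat.gcd (j * (n / d)) (d * (n / d)) := by rw [Nat.mul_div_cancel' hd]
    _ = n / d := by rw [Nat.gcd_mul_right, hj, one_mul]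

theorem apply_mul_div_eq_of_forall_apply_gcd {α : Type*} {m : ℕ → α} {n : ℕ} (hn : n ≠ 0)
    (hm : ∀ k : ℕ, 1 ≤ k → m k = m (Nat.gcd k n)) {d j : ℕ} (hd : d ∣ n) (hj_pos : 0 < j)
    (hj : Nat.gcd j d = 1) : m (j * (n / d)) = m (n / d) := by
  have div_pos : 0 < n / d := Nat.pos_of_dvd_of_pos (Nat.div_dvd_of_dvd hd) (Nat.pos_of_ne_zero hn)
  rw [hm _ (Nat.mul_pos hj_pos div_pos), gcd_mul_div_of_gcd_eq_one hd hj]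

theorem card_filter_Icc_gcd_eq_one (d : ℕ) :
    ((Finset.Icc 1 d).filter fun j => Nat.gcd j d = 1).card = d.totient := by
  rw [← Nat.filter_coprime_Ico_eq_totient d 1, add_comm 1 d, Finset.Ico_add_one_right_eq_Icc]
  simp only [Nat.coprime_iff_gcd_eq_one, Nat.gcd_comm]

theorem filter_Icc_div_gcd_eq_image {d n : ℕ} (hn : n ≠ 0) (hd : d ∣ n) :
    ((Finset.Icc 1 n).filter fun k => n / Nat.gcd k n = d) =
      ((Finset.Icc 1 d).filter fun j => Nat.gcd j d = 1).image (· * (n / d)) := by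
  ext k
  simp only [Finset.mem_image, Finset.mem_filter, Finset.mem_Icc]
  constructor
  · rintro ⟨⟨hk_pos, hkn⟩, rfl⟩
    have gcd_pos : 0 < Nat.gcd k n := Nat.gcd_pos_of_pos_left n hk_pos
    refine ⟨k / Nat.gcd k n, ⟨⟨?_, Nat.div_le_div_right hkn⟩,
      Nat.coprime_div_gcd_div_gcd gcd_pos⟩, ?_⟩
    · exact Nat.div_pos (Nat.gcd_le_left n hk_pos) gcd_pos
    · rw [Nat.div_div_self (Nat.gcd_dvd_right k n) hn, Nat.div_mul_cancel (Nat.gcd_dvd_left k n)]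
  · rintro ⟨j, ⟨⟨hj_pos, hjd⟩, hj⟩, rfl⟩
    have div_pos : 0 < n / d :=
      Nat.pos_of_dvd_of_pos (Nat.div_dvd_of_dvd hd) (Nat.pos_of_ne_zero hn)
    refine ⟨⟨Nat.mul_pos hj_pos div_pos, ?_⟩, ?_⟩
    · exact (Nat.mul_le_mul_right (n / d) hjd).trans_eq (Nat.mul_div_cancel' hd)
    · rw [gcd_mul_div_of_gcd_eq_one hd hj, Nat.div_div_self hd hn]

theorem sum_Icc_eq_sum_divisors_sum_coprime {M : Type*} [AddCommMonoid M] {n : ℕ} (hn : n ≠ 0)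
    (f : ℕ → M) :
    ∑ k ∈ Finset.Icc 1 n, f k =
      ∑ d ∈ n.divisors, ∑ j ∈ (Finset.Icc 1 d).filter (fun j => Nat.gcd j d = 1),
        f (j * (n / d)) := by
  have div_gcd_mem : ∀ k ∈ Finset.Icc 1 n, n / Nat.gcd k n ∈ n.divisors := fun k _ =>
    Nat.mem_divisors.2 ⟨Nat.div_dvd_of_dvd (Nat.gcd_dvd_right k n), hn⟩
  rw [← Finset.sum_fiberwise_of_maps_to div_gcd_mem]
  refine Finset.sum_congr rfl fun d hd => ?_
  have hdn : d ∣ n := Nat.dvd_of_mem_divisors hd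
  have div_ne_zero : n / d ≠ 0 := ne_zero_of_dvd_ne_zero hn (Nat.div_dvd_of_dvd hdn)
  rw [filter_Icc_div_gcd_eq_image hn hdn, Finset.sum_image]
  exact (mul_left_injective₀ div_ne_zero).injOn

theorem sum_Icc_sub_one_eq_sum_divisors_sum_coprime {M : Type*} [AddCancelCommMonoid M] {n : ℕ}
    (hn : n ≠ 0) (f : ℕ → M) :
    ∑ k ∈ Finset.Icc 1 (n - 1), f k =
      ∑ d ∈ n.divisors.filter (fun d => 1 < d),
        ∑ j ∈ (Finset.Icc 1 d).filter (fun j => Nat.gcd j d = 1), f (j * (n / d)) := by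
  have not_one_lt : n.divisors.filter (fun d => ¬ 1 < d) = {1} := by
    ext d
    simp only [Finset.mem_filter, Nat.mem_divisors, Finset.mem_singleton, not_lt]
    constructor
    · rintro ⟨⟨hdn, _⟩, hd⟩
      exact le_antisymm hd (Nat.pos_of_dvd_of_pos hdn (Nat.pos_of_ne_zero hn))
    · rintro rfl
      exact ⟨⟨one_dvd n, hn⟩, le_rfl⟩
  have term_one : ∑ j ∈ (Finset.Icc 1 1).filter (fun j => Nat.gcd j 1 = 1), f (j * (n / 1)) =
      f n := by simp
  refine add_right_cancel (b := f n) ?_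
  calc ∑ k ∈ Finset.Icc 1 (n - 1), f k + f n
      = ∑ k ∈ Finset.Icc 1 n, f k := by
        obtain ⟨n, rfl⟩ := Nat.exists_eq_succ_of_ne_zero hn
        exact (Finset.sum_Icc_succ_top (Nat.le_add_left 1 n) f).symm
    _ = _ := by
        rw [sum_Icc_eq_sum_divisors_sum_coprime hn,
          ← Finset.sum_filter_add_sum_filter_not n.divisors (fun d => 1 < d), not_one_lt,
          Finset.sum_singleton, term_one]

theorem stmt_12_general {R : Type*} [Ring R] {h : ℕ} (hh : h ≠ 0) {m : ℕ → R}
    (hm : ∀ k : ℕ, 1 ≤ k → m k = m (Nat.gcd k h)) :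
    C (∑ k ∈ Finset.Icc 1 (h - 1), m k) - ∑ k ∈ Finset.Icc 1 (h - 1), C (m k) * X ^ k =
      ∑ d ∈ h.divisors.filter (fun d => 1 < d), C (m (h / d)) *
        (C (d.totient : R) -
          ∑ j ∈ (Finset.Icc 1 d).filter (fun j => Nat.gcd j d = 1),
            (X : R[X]) ^ (j * (h / d))) := by
  calc C (∑ k ∈ Finset.Icc 1 (h - 1), m k) - ∑ k ∈ Finset.Icc 1 (h - 1), C (m k) * X ^ k
      = ∑ k ∈ Finset.Icc 1 (h - 1), C (m k) * (1 - X ^ k) := by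
        simp only [map_sum, mul_sub, mul_one, Finset.sum_sub_distrib]
    _ = ∑ d ∈ h.divisors.filter (fun d => 1 < d),
          ∑ j ∈ (Finset.Icc 1 d).filter (fun j => Nat.gcd j d = 1),
            C (m (j * (h / d))) * (1 - X ^ (j * (h / d))) :=
        sum_Icc_sub_one_eq_sum_divisors_sum_coprime hh _
    _ = _ := by
        refine Finset.sum_congr rfl fun d hd => ?_
        have hdh : d ∣ h := Nat.dvd_of_mem_divisors (Finset.mem_filter.1 hd).1
        have weight_eq : ∀ j ∈ (Finset.Icc 1 d).filter (fun j => Nat.gcd j d = 1),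
            C (m (j * (h / d))) * (1 - X ^ (j * (h / d))) =
              C (m (h / d)) * (1 - X ^ (j * (h / d))) := by
          intro j hj
          obtain ⟨hj_mem, hj_coprime⟩ := Finset.mem_filter.1 hj
          rw [apply_mul_div_eq_of_forall_apply_gcd hh hm hdh (Finset.mem_Icc.1 hj_mem).1 hj_coprime]
        rw [Finset.sum_congr rfl weight_eq, ← Finset.mul_sum, Finset.sum_sub_distrib,
          Finset.sum_const, card_filter_Icc_gcd_eq_one, nsmul_one, map_natCast]

/-- Let `h ≥ 2` and let `m : ℕ → ℕ` be an `h`-Cohen function with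
`m(0) = m(h) = 0`. With `n := ∑_{k=1}^{h−1} m(k)`, `E(q) := ∑_{k=1}^{h−1} m(k) q^k`
and `Ψ_d(q) := ∑_{1 ≤ j ≤ d, gcd(j,d)=1} q^j`, the identity
`n − E(q) = ∑_{d ∣ h, d > 1} m(h/d) (φ(d) − Ψ_d(q^{h/d}))` holds in `ℂ[q]`. -/
theorem stmt_12 (h : ℕ) (hh : 2 ≤ h)
    (m : ℕ → ℕ) (hm : ∀ k : ℕ, 1 ≤ k → m k = m (Nat.gcd k h))
    (hmh : m h = 0) (hm0 : m 0 = 0)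
    (n : ℕ) (hn : n = ∑ k ∈ Finset.Icc 1 (h - 1), m k) :
    (C (n : ℂ)) - ∑ k ∈ Finset.Icc 1 (h - 1), C ((m k : ℂ)) * X ^ k =
      ∑ d ∈ h.divisors.filter (fun d => 1 < d), C ((m (h / d) : ℂ)) *
        (C ((d.totient : ℂ)) -
          ∑ j ∈ (Finset.Icc 1 d).filter (fun j => Nat.gcd j d = 1),
            (X : Polynomial ℂ) ^ (j * (h / d))) := by
  subst hn
  simpa only [Nat.cast_sum] using
    stmt_12_general (m := fun k => (m k : ℂ)) (by omega) fun k hk => congrArg _ (hm k hk)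
end
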